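/- arXiv:0712.2924 — 2 statements merged into one kernel-verified Lean document; each statement's English description precedes it below -/
import Mathlib

section
/- Let N : ℕ, let X : ℝ satisfy 0 ≤ X ≤ 1, and let f, g : Fin N → Bool with m := d(f,g). Then ∑_{h : Fin N → Bool} X^(d(f,h) + d(g,h)) = 2^m * X^m * (1 + X^2)^(N - m). (This is the key combinatorial identity in the proof of Lemma 2.) -/
/-- Hamming distance: the number of indices on which two configurations differ. -/
def hamming {N : ℕ} (f g : Fin N → Bool) : ℕ :=
  (Finset.univ.filter fun i => f i ≠ g i).card

/-- The key combinatorial identity in the proof of Lemma 2: with `m = d(f,g)`,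
`∑_h X^{d(f,h)+d(g,h)} = 2^m X^m (1+X²)^{N-m}`. -/
theorem sum_hamming_weight (N : ℕ) (X : ℝ) (hX0 : 0 ≤ X) (hX1 : X ≤ 1)
    (f g : Fin N → Bool) :
    ∑ h : Fin N → Bool, X ^ (hamming f h + hamming g h) =
      2 ^ hamming f g * X ^ hamming f g * (1 + X ^ 2) ^ (N - hamming f g) := by
  have key : ∀ h : Fin N → Bool, X ^ (hamming f h + hamming g h) =
      ∏ i, ((if f i ≠ h i then X else 1) * (if g i ≠ h i then X else 1)) := by
    intro h
    rw [pow_add, Finset.prod_mul_distrib]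
    simp only [hamming, Finset.prod_ite, Finset.prod_const, one_pow, mul_one]
  have hc : (Finset.univ.filter fun i => ¬ (f i ≠ g i)).card = N - hamming f g := by
    have h := Finset.card_filter_add_card_filter_not (s := (Finset.univ : Finset (Fin N)))
      (fun i => f i ≠ g i)
    rw [Finset.card_univ, Fintype.card_fin] at h
    unfold hamming
    omega
  have hp := Finset.prod_univ_sum (fun _ : Fin N => (Finset.univ : Finset Bool))
    (fun i b => (if f i ≠ b then X else 1) * (if g i ≠ b then X else 1))
  rw [Fintype.piFinset_univ] at hp
  rw [Finset.sum_congr rfl (fun h _ => key h), ← hp]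
  have hs : ∀ i, (∑ b : Bool, (if f i ≠ b then X else 1) * (if g i ≠ b then X else 1)) =
      if f i ≠ g i then 2 * X else 1 + X ^ 2 := by
    intro i
    rw [Fintype.sum_bool]
    cases f i <;> cases g i <;> simp <;> ring
  rw [Finset.prod_congr rfl (fun i _ => hs i), Finset.prod_ite, Finset.prod_const,
    Finset.prod_const, hc, mul_pow]
  rfl
end

section
/- Let N : ℕ, let X : ℝ satisfy 0 ≤ X ≤ 1, and let f, g : Fin N → Bool. Then ∑_{h : Fin N → Bool} X^(d(f,h) + d(g,h)) / (1 + X^2)^N = (2*X / (1 + X^2))^(d(f,g)). (This is the content of Lemma 2: coarse graining the coupled decoherence functional D_qc over the classical histories multiplies the unitary decoherence functional D_q(Cyl(Φⁿ); Cyl(Φ̄ⁿ)) by the environmental-decoherence suppression factor (2X/(1+X²))^(d(Φⁿ,Φ̄ⁿ)).) -/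
/-- Lemma 2: coarse graining the coupled decoherence functional over the classical histories
produces the environmental-decoherence suppression factor `(2X/(1+X²))^{d(f,g)}`. -/
theorem sum_hamming_weight_normalized (N : ℕ) (X : ℝ) (hX0 : 0 ≤ X) (hX1 : X ≤ 1)
    (f g : Fin N → Bool) :
    ∑ h : Fin N → Bool, X ^ (hamming f h + hamming g h) / (1 + X ^ 2) ^ N =
      (2 * X / (1 + X ^ 2)) ^ hamming f g := by
  have hpos : (1 + X ^ 2 : ℝ) ≠ 0 := by positivity
  have key : ∀ (Y : ℝ) (a b : Fin N → Bool),
      Y ^ hamming a b = ∏ i, (if a i ≠ b i then Y else 1) := by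
    intro Y a b
    rw [hamming, Finset.prod_ite]
    simp
  have hN : (1 + X ^ 2) ^ N = ∏ _i : Fin N, (1 + X ^ 2) := by simp
  simp_rw [pow_add, key, hN, ← Finset.prod_mul_distrib, ← Finset.prod_div_distrib]
  rw [← Fintype.prod_sum (fun (i : Fin N) (c : Bool) =>
    ((if f i ≠ c then X else 1) * (if g i ≠ c then X else 1)) / (1 + X ^ 2))]
  refine Finset.prod_congr rfl fun i _ => ?_
  rw [Fintype.sum_bool]
  cases f i <;> cases g i <;> simp <;> field_simp <;> ring
end
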